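/- arXiv:1008.0144 — 2 statements merged into one kernel-verified Lean document; each statement's English description precedes it below -/
import Mathlib

section
/- Let ν > −1, N ≥ 1, and let a₁, …, a_N be distinct positive reals. Define, for y > 0, Q(y) = Σ_{ℓ=1}^N [ (1/2) (y/a_ℓ)^{ν/2} e^{−(a_ℓ+y)/2} I_ν(√(a_ℓ y)) / ∏_{k≠ℓ} (a_ℓ − a_k) ]. Then ∫₀^∞ Q(y) y^i dy = 0 for every integer 0 ≤ i ≤ N−2, and ∫₀^∞ Q(y) y^{N−1} dy = 1. -/
open MeasureTheory Real

/-- The modified Bessel function of the first kind `I_ν(z)`. -/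
noncomputable def besselI (ν z : ℝ) : ℝ :=
  ∑' n : ℕ, ((1 : ℝ) / (Real.Gamma ((n : ℝ) + 1) * Real.Gamma ((n : ℝ) + 1 + ν))) *
    (z / 2) ^ (2 * (n : ℝ) + ν)

/-- Type-I multiple orthogonal function `Q` associated with the modified Bessel
weight, in its residue-sum representation for distinct points `a ℓ`. -/
noncomputable def typeIQ (ν : ℝ) {N : ℕ} (a : Fin N → ℝ) (y : ℝ) : ℝ :=
  ∑ ℓ : Fin N,
    (1 / 2) * (y / a ℓ) ^ (ν / 2) * Real.exp (-(a ℓ + y) / 2) *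
      besselI ν (Real.sqrt (a ℓ * y)) / ∏ k ∈ Finset.univ.erase ℓ, (a ℓ - a k)

/-!
For `y > 0`, the `ℓ`-th summand of `Q`, stripped of `∏_{k ≠ ℓ} (a_ℓ - a_k)`, is a noncentral
chi-squared density: expanding the Bessel function exhibits it as a mixture of gamma densities of
shape `n + ν + 1` and rate `1 / 2`, with `n` Poisson of parameter `a_ℓ / 2`. The `i`-th moment of
such a gamma density is `2 ^ i` times a rising factorial of its shape, and the Poisson average of
that rising factorial is a monic polynomial of degree `i` in the parameter. The `i`-th moment is
therefore `P_i(a_ℓ)` with `P_i` monic of degree `i`, and by Lagrange interpolation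
`∑_ℓ P_i(a_ℓ) / ∏_{k ≠ ℓ} (a_ℓ - a_k)` is the coefficient of degree `N - 1` of `P_i`.
-/

section PoissonMoments

open Polynomial
open scoped Nat

/-- The polynomial `λ ↦ 𝔼 (n + c)(n + c + 1)⋯(n + c + i - 1)` for `n` Poisson of parameter `λ`;
classically `i! L_i^(c - 1)(-λ)`, with `L` the generalized Laguerre polynomial. The recursion comes
from `(n + c)(n + c + 1)⋯(n + c + i) = (c + n) (n + c + 1)⋯(n + c + i)`, where the factor `n` turns
into a multiplication by `λ` and a shift of `n`. -/
noncomputable def poissonRisingMoment {R : Type*} [Semiring R] : ℕ → R → R[X]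
  | 0, _ => 1
  | i + 1, c => C c * poissonRisingMoment i (c + 1) + poissonRisingMoment i (c + 2) * X

theorem isMonicOfDegree_poissonRisingMoment {R : Type*} [Semiring R] [Nontrivial R] (i : ℕ)
    (c : R) : IsMonicOfDegree (poissonRisingMoment i c) i := by
  induction i generalizing c with
  | zero => exact isMonicOfDegree_zero_iff.mpr rfl
  | succ i ih =>
    refine IsMonicOfDegree.add_left ?_ ?_
    · exact (natDegree_C_mul_le _ _).trans_lt ((ih (c + 1)).natDegree_eq.trans_lt i.lt_succ_self)
    · exact (ih (c + 2)).mul (isMonicOfDegree_X R)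

theorem poissonRisingMoment_eval_pos {R : Type*} [Semiring R] [PartialOrder R]
    [IsStrictOrderedRing R] (i : ℕ) {c x : R} (hc : 0 < c) (hx : 0 ≤ x) :
    0 < (poissonRisingMoment i c).eval x := by
  induction i generalizing c with
  | zero => simp [poissonRisingMoment]
  | succ i ih =>
    have h₁ := ih (c := c + 1) (by positivity)
    have h₂ := ih (c := c + 2) (by positivity)
    simp only [poissonRisingMoment, eval_add, eval_C_mul, eval_mul_X]
    positivity

theorem hasSum_pow_div_factorial_mul_natCast_mul {K : Type*} [Field K] [CharZero K]
    [TopologicalSpace K] [IsTopologicalRing K] {f : ℕ → K} {x s : K}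
    (h : HasSum (fun n ↦ x ^ n / n ! * f (n + 1)) s) :
    HasSum (fun n ↦ x ^ n / n ! * (n * f n)) (x * s) := by
  rw [← hasSum_nat_add_iff' 1]
  have hterm (n : ℕ) : x ^ (n + 1) / (n + 1)! * ((n + 1 : ℕ) * f (n + 1)) =
      x * (x ^ n / n ! * f (n + 1)) := by
    have : ((n + 1 : ℕ) : K) ≠ 0 := Nat.cast_ne_zero.mpr n.succ_ne_zero
    have : (n ! : K) ≠ 0 := Nat.cast_ne_zero.mpr n.factorial_ne_zero
    rw [Nat.factorial_succ, Nat.cast_mul]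
    field_simp
    ring
  simpa only [hterm, Finset.sum_range_one, Nat.cast_zero, zero_mul, mul_zero, sub_zero]
    using h.mul_left x

theorem ascPochhammer_succ_eval_left {R : Type*} [CommSemiring R] (i : ℕ) (c : R) :
    (ascPochhammer R (i + 1)).eval c = c * (ascPochhammer R i).eval (c + 1) := by
  simp [ascPochhammer_succ_left, eval_comp]

theorem hasSum_pow_div_factorial_mul_ascPochhammer {K : Type*} [NormedField K] [NormedAlgebra ℚ K]
    [CompleteSpace K] (i : ℕ) (c x : K) :
    HasSum (fun n : ℕ ↦ x ^ n / n ! * (ascPochhammer K i).eval (n + c))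
      (NormedSpace.exp x * (poissonRisingMoment i c).eval x) := by
  have : CharZero K := algebraRat.charZero K
  induction i generalizing c with
  | zero => simpa [poissonRisingMoment] using NormedSpace.expSeries_div_hasSum_exp x
  | succ i ih =>
    have hshift : HasSum (fun n : ℕ ↦ x ^ n / n ! * (n * (ascPochhammer K i).eval (n + (c + 1))))
        (x * (NormedSpace.exp x * (poissonRisingMoment i (c + 2)).eval x)) := by
      refine hasSum_pow_div_factorial_mul_natCast_mul
        (f := fun n ↦ (ascPochhammer K i).eval (n + (c + 1))) ?_
      convert ih (c + 2) using 4
      push_cast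
      ring
    convert! ((ih (c + 1)).mul_left c).add hshift using 1
    · ext n
      rw [ascPochhammer_succ_eval_left, add_assoc]
      ring
    · simp only [poissonRisingMoment, eval_add, eval_C_mul, eval_mul_X]
      ring

end PoissonMoments

section GammaMoments

open Polynomial ProbabilityTheory Set

theorem gamma_add_natCast_eq_ascPochhammer_mul {s : ℝ} (hs : 0 < s) (i : ℕ) :
    Gamma (s + i) = (ascPochhammer ℝ i).eval s * Gamma s := by
  induction i with
  | zero => simp
  | succ i ih =>
    rw [Nat.cast_succ, ← add_assoc, Gamma_add_one (by positivity), ih, ascPochhammer_succ_eval]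
    ring

theorem integral_gammaPDFReal_mul_pow {s r : ℝ} (hs : 0 < s) (hr : 0 < r) (i : ℕ) :
    ∫ y in Ioi 0, gammaPDFReal s r y * y ^ i = (ascPochhammer ℝ i).eval s / r ^ i := by
  have hpdf : ∀ y ∈ Ioi (0 : ℝ), gammaPDFReal s r y * y ^ i =
      r ^ s / Gamma s * (y ^ (s + i - 1) * exp (-(r * y))) := fun y (hy : 0 < y) ↦ by
    rw [gammaPDFReal, if_pos hy.le, add_sub_right_comm, rpow_add hy, rpow_natCast]
    ring
  have hΓ : Gamma s ≠ 0 := (Gamma_pos_of_pos hs).ne'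
  have hrs : r ^ s ≠ 0 := (rpow_pos_of_pos hr s).ne'
  rw [setIntegral_congr_fun measurableSet_Ioi hpdf, integral_const_mul,
    integral_rpow_mul_exp_neg_mul_Ioi (by positivity) hr,
    gamma_add_natCast_eq_ascPochhammer_mul hs, one_div, inv_rpow hr.le, rpow_add hr, rpow_natCast]
  field_simp

theorem integrableOn_gammaPDFReal_mul_pow {s r : ℝ} (hs : 0 < s) (hr : 0 < r) (i : ℕ) :
    IntegrableOn (fun y ↦ gammaPDFReal s r y * y ^ i) (Ioi 0) := by
  refine .of_integral_ne_zero ?_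
  have := ascPochhammer_pos i s hs
  rw [integral_gammaPDFReal_mul_pow hs hr]
  positivity

end GammaMoments

theorem integral_tsum_of_hasSum_integral_of_nonneg {α ι : Type*} [MeasurableSpace α] [Countable ι]
    {μ : Measure α} {F : ι → α → ℝ} {s : ℝ} (hF : ∀ i, Integrable (F i) μ)
    (hF₀ : ∀ i, 0 ≤ᵐ[μ] F i) (hs : HasSum (fun i ↦ ∫ x, F i x ∂μ) s) :
    ∫ x, ∑' i, F i x ∂μ = s := by
  have hnorm (i : ι) : ∫ x, ‖F i x‖ ∂μ = ∫ x, F i x ∂μ :=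
    integral_congr_ae <| (hF₀ i).mono fun _ h ↦ norm_of_nonneg h
  have hsum : Summable fun i ↦ ∫ x, ‖F i x‖ ∂μ := by simpa only [hnorm] using hs.summable
  exact (hasSum_integral_of_summable_integral_norm hF hsum).unique hs

section BesselWeight

open Polynomial ProbabilityTheory Set
open scoped Nat

/-- The modified Bessel weight `w_ν(a, y)` whose combinations over the nodes `a ℓ` form `typeIQ`:
the density at `y` of the noncentral chi-squared distribution with `2 (ν + 1)` degrees of freedom
and noncentrality parameter `a`. -/
noncomputable def besselWeight (ν a y : ℝ) : ℝ :=
  (1 / 2) * (y / a) ^ (ν / 2) * exp (-(a + y) / 2) * besselI ν (√(a * y))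

theorem typeIQ_eq_sum_besselWeight (ν : ℝ) {N : ℕ} (a : Fin N → ℝ) (y : ℝ) :
    typeIQ ν a y = ∑ ℓ, besselWeight ν (a ℓ) y / ∏ k ∈ Finset.univ.erase ℓ, (a ℓ - a k) :=
  rfl

theorem sqrt_mul_div_two_rpow {a y : ℝ} (ha : 0 < a) (hy : 0 < y) (ν : ℝ) (n : ℕ) :
    (√(a * y) / 2) ^ (2 * n + ν) =
      (a / 2) ^ n * a ^ (ν / 2) * (y ^ n * y ^ (ν / 2)) * (1 / 2) ^ (n + ν) := by
  calc (√(a * y) / 2) ^ (2 * n + ν)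
    _ = (a * y) ^ (1 / 2 * (2 * n + ν)) * (1 / 2) ^ (2 * n + ν) := by
      rw [div_eq_mul_one_div, mul_rpow (by positivity) (by positivity), sqrt_eq_rpow,
        ← rpow_mul (by positivity)]
    _ = (a * y) ^ (n + ν / 2) * (1 / 2) ^ (n + (n + ν)) := by ring_nf
    _ = (a / 2) ^ n * a ^ (ν / 2) * (y ^ n * y ^ (ν / 2)) * (1 / 2) ^ (n + ν) := by
      rw [mul_rpow ha.le hy.le, rpow_add ha, rpow_add hy, rpow_add one_half_pos n (n + ν)]
      simp only [rpow_natCast]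
      ring

theorem besselWeight_eq_tsum_gammaPDFReal {a y : ℝ} (ha : 0 < a) (hy : 0 < y) (ν : ℝ) :
    besselWeight ν a y =
      ∑' n : ℕ, exp (-(a / 2)) * ((a / 2) ^ n / n !) * gammaPDFReal (n + (ν + 1)) (1 / 2) y := by
  rw [besselWeight, besselI, ← tsum_mul_left]
  refine tsum_congr fun n ↦ ?_
  have hexp : exp (-(a + y) / 2) = exp (-(a / 2)) * exp (-(1 / 2 * y)) := by
    rw [← exp_add]; congr 1; ring
  have hhalf : (1 / 2 : ℝ) ^ (n + (ν + 1)) = (1 / 2) ^ (n + ν) * (1 / 2) := by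
    rw [← add_assoc, rpow_add_one (by norm_num)]
  have hy_pow : y ^ (n + (ν + 1) - 1) = y ^ n * (y ^ (ν / 2) * y ^ (ν / 2)) := by
    rw [← rpow_add hy, ← rpow_natCast, ← rpow_add hy]; congr 1; ring
  have ha_ne : a ^ (ν / 2) ≠ 0 := (rpow_pos_of_pos ha _).ne'
  rw [gammaPDFReal, if_pos hy.le, sqrt_mul_div_two_rpow ha hy, Gamma_nat_eq_factorial, hexp, hhalf,
    hy_pow, div_rpow hy.le ha.le, add_right_comm (n : ℝ) 1 ν, add_assoc (n : ℝ) ν 1]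
  field_simp

theorem integral_besselWeight_mul_pow {ν a : ℝ} (hν : -1 < ν) (ha : 0 < a) (i : ℕ) :
    ∫ y in Ioi 0, besselWeight ν a y * y ^ i =
      2 ^ i * (poissonRisingMoment i (ν + 1)).eval (a / 2) := by
  have hs (n : ℕ) : 0 < n + (ν + 1) :=
    add_pos_of_nonneg_of_pos n.cast_nonneg (neg_lt_iff_pos_add.mp hν)
  let F (n : ℕ) (y : ℝ) : ℝ :=
    exp (-(a / 2)) * ((a / 2) ^ n / n !) * (gammaPDFReal (n + (ν + 1)) (1 / 2) y * y ^ i)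
  have hF (n : ℕ) : IntegrableOn (F n) (Ioi 0) :=
    (integrableOn_gammaPDFReal_mul_pow (hs n) one_half_pos i).const_mul _
  have hF₀ (n : ℕ) : 0 ≤ᵐ[volume.restrict (Ioi 0)] F n :=
    (ae_restrict_mem measurableSet_Ioi).mono fun y (hy : 0 < y) ↦ by
      have := gammaPDFReal_nonneg (hs n) one_half_pos y
      positivity
  have hsum : HasSum (fun n ↦ ∫ y in Ioi 0, F n y)
      (2 ^ i * (poissonRisingMoment i (ν + 1)).eval (a / 2)) := by
    convert! (hasSum_pow_div_factorial_mul_ascPochhammer i (ν + 1) (a / 2)).mul_left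
      (2 ^ i * exp (-(a / 2))) using 1
    · ext n
      rw [integral_const_mul, integral_gammaPDFReal_mul_pow (hs n) one_half_pos, one_div_pow,
        div_div_eq_mul_div, div_one]
      ring
    · rw [← exp_eq_exp_ℝ, mul_assoc, ← mul_assoc (exp _), ← exp_add]
      simp
  rw [← integral_tsum_of_hasSum_integral_of_nonneg hF hF₀ hsum]
  refine setIntegral_congr_fun measurableSet_Ioi fun y hy ↦ ?_
  simp only [F, besselWeight_eq_tsum_gammaPDFReal ha hy, ← tsum_mul_right, mul_assoc]

theorem integrableOn_besselWeight_mul_pow {ν a : ℝ} (hν : -1 < ν) (ha : 0 < a) (i : ℕ) :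
    IntegrableOn (fun y ↦ besselWeight ν a y * y ^ i) (Ioi 0) := by
  refine .of_integral_ne_zero ?_
  have := poissonRisingMoment_eval_pos i (neg_lt_iff_pos_add.mp hν) (half_pos ha).le
  rw [integral_besselWeight_mul_pow hν ha]
  positivity

theorem integral_typeIQ_mul_pow {ν : ℝ} (hν : -1 < ν) {N : ℕ} {a : Fin N → ℝ}
    (ha : ∀ ℓ, 0 < a ℓ) (ha_inj : Function.Injective a) {i : ℕ} (hi : i < N) :
    ∫ y in Ioi 0, typeIQ ν a y * y ^ i = (poissonRisingMoment i (ν + 1)).coeff (N - 1) := by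
  have hdeg := (isMonicOfDegree_poissonRisingMoment i (ν + 1)).natDegree_eq
  -- `P` is the moment as a polynomial in `a` instead of the Poisson parameter `a / 2`.
  set P := (poissonRisingMoment i (ν + 1)).scaleRoots 2 with hP
  have heval (ℓ : Fin N) : ∫ y in Ioi 0, besselWeight ν (a ℓ) y * y ^ i = P.eval (a ℓ) := by
    have := scaleRoots_eval_mul (poissonRisingMoment i (ν + 1)) (a ℓ / 2) 2
    rw [mul_div_cancel₀ _ two_ne_zero, hdeg] at this
    rw [integral_besselWeight_mul_pow hν (ha ℓ), hP, this]
  have hPdeg : P.degree < (Finset.univ : Finset (Fin N)).card := by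
    rw [Finset.card_fin]
    exact degree_le_natDegree.trans_lt (by rwa [natDegree_scaleRoots, hdeg, Nat.cast_lt])
  have hcoeff : P.coeff (N - 1) = (poissonRisingMoment i (ν + 1)).coeff (N - 1) := by
    rw [hP, coeff_scaleRoots, hdeg, Nat.sub_eq_zero_of_le (Nat.le_sub_one_of_lt hi), pow_zero,
      mul_one]
  calc ∫ y in Ioi 0, typeIQ ν a y * y ^ i
    _ = ∫ y in Ioi 0, ∑ ℓ, besselWeight ν (a ℓ) y * y ^ i /
          ∏ k ∈ Finset.univ.erase ℓ, (a ℓ - a k) := by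
      simp only [typeIQ_eq_sum_besselWeight, Finset.sum_mul, div_mul_eq_mul_div]
    _ = ∑ ℓ, P.eval (a ℓ) / ∏ k ∈ Finset.univ.erase ℓ, (a ℓ - a k) := by
      rw [integral_finsetSum _ fun ℓ _ ↦
        (integrableOn_besselWeight_mul_pow hν (ha ℓ) i).div_const _]
      simp only [integral_div, heval]
    _ = P.coeff (N - 1) := by
      rw [← Lagrange.coeff_eq_sum ha_inj.injOn hPdeg, Finset.card_fin]
    _ = (poissonRisingMoment i (ν + 1)).coeff (N - 1) := hcoeff

end BesselWeight

/-- Orthogonality relations of the type-I multiple orthogonal function: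
`∫₀^∞ Q(y) yⁱ dy = 0` for `0 ≤ i ≤ N−2` and `∫₀^∞ Q(y) y^{N−1} dy = 1`. -/
theorem typeIQ_orthogonality
    (ν : ℝ) (hν : -1 < ν) (N : ℕ) (hN : 1 ≤ N) (a : Fin N → ℝ)
    (hapos : ∀ ℓ, 0 < a ℓ) (hdist : Function.Injective a) :
    (∀ i : ℕ, i + 2 ≤ N → ∫ y in Set.Ioi (0 : ℝ), typeIQ ν a y * y ^ i = 0) ∧
      ∫ y in Set.Ioi (0 : ℝ), typeIQ ν a y * y ^ (N - 1) = 1 := by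
  have hmonic (i : ℕ) := isMonicOfDegree_poissonRisingMoment i (ν + 1)
  constructor
  · intro i hi
    rw [integral_typeIQ_mul_pow hν hapos hdist (by lia)]
    exact Polynomial.coeff_eq_zero_of_natDegree_lt ((hmonic i).natDegree_eq.trans_lt (by lia))
  · rw [integral_typeIQ_mul_pow hν hapos hdist (by lia)]
    exact ((Polynomial.isMonicOfDegree_iff _ _).mp (hmonic (N - 1))).2
end

section
/- Let ν > −1, N ≥ 1, let 0 < a₁ < ⋯ < a_N be distinct positive reals, let t > 0, let 1 ≤ n ≤ N, and let x₁, …, x_n be distinct positive reals. Define the correlation kernel K_t(x, y) = Σ_{ℓ=1}^N p^{(ν)}(t, x | a_ℓ) · ∫₀^∞ [ ∏_{k ≠ ℓ} (a_k + v)/(a_k − a_ℓ) ] · q^{(ν)}_t(v, y) dv. Then the single-time n-point correlation function of the noncolliding BESQ^{(ν)} process started at (a₁, …, a_N) equals a determinant: (1/(N−n)!) · ∫_{(0,∞)^{N−n}} [ ∏_{1≤i<j≤N} (x_j − x_i) / ∏_{1≤i<j≤N} (a_j − a_i) ] · det_{1≤i,j≤N}[ p^{(ν)}(t, x_i | a_j)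 ] dx_{n+1} ⋯ dx_N = det_{1≤i,j≤n}[ K_t(x_i, x_j) ]. -/
open MeasureTheory Real

/-- The Bessel function of the first kind `J_ν(z)`. -/
noncomputable def besselJ (ν z : ℝ) : ℝ :=
  ∑' n : ℕ, ((-1 : ℝ) ^ n / (Real.Gamma ((n : ℝ) + 1) * Real.Gamma ((n : ℝ) + 1 + ν))) *
    (z / 2) ^ (2 * (n : ℝ) + ν)

/-- The BESQ^{(ν)} transition probability density `p^{(ν)}(t, y | x)`. -/
noncomputable def besqP (ν t y x : ℝ) : ℝ :=
  (1 / (2 * t)) * (y / x) ^ (ν / 2) * Real.exp (-(x + y) / (2 * t)) *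
    besselI ν (Real.sqrt (x * y) / t)

/-- The kernel `q^{(ν)}_t(v, y)`, real form of `p^{(ν)}(−t, −v | y)`. -/
noncomputable def besqQ (ν t v y : ℝ) : ℝ :=
  (1 / (2 * t)) * (v / y) ^ (ν / 2) * Real.exp ((y - v) / (2 * t)) *
    besselJ ν (Real.sqrt (v * y) / t)

/-- The single-time correlation kernel
`K_t(x, y) = Σ_ℓ p^{(ν)}(t, x|a_ℓ) ∫₀^∞ ∏_{k≠ℓ} (a_k+v)/(a_k−a_ℓ) q^{(ν)}_t(v, y) dv`. -/
noncomputable def corrK (ν : ℝ) {N : ℕ} (a : Fin N → ℝ) (t x y : ℝ) : ℝ :=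
  ∑ ℓ : Fin N, besqP ν t x (a ℓ) *
    ∫ v in Set.Ioi (0 : ℝ),
      (∏ k ∈ Finset.univ.erase ℓ, ((a k + v) / (a k - a ℓ))) * besqQ ν t v y

/-- The Vandermonde product `h_N(x) = ∏_{i<j} (x_j − x_i)`. -/
noncomputable def vdm {N : ℕ} (x : Fin N → ℝ) : ℝ :=
  ∏ i : Fin N, ∏ j ∈ Finset.Ioi i, (x j - x i)

/-- Extension of `x : Fin n → ℝ` by the integration variables `z : Fin (N−n) → ℝ`. -/
noncomputable def extendConfig {N n : ℕ} (hn : n ≤ N) (x : Fin n → ℝ)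
    (z : Fin (N - n) → ℝ) : Fin N → ℝ :=
  fun i => if h : (i : ℕ) < n then x ⟨i, h⟩
    else z ⟨(i : ℕ) - n, by have := i.isLt; omega⟩

/-!
The density of the particles is a product of two determinants, in the transition densities
`besqP ν t · (a k)` and, up to a constant, in any basis `q` of the polynomials of degree less than
`N`. Once `q` is chosen biorthogonal to the densities, the expansion behind Cauchy–Binet shows that
integrating out all but `n` variables leaves the determinant of the kernel
`∑ l, besqP ν t x (a l) * q l y`.

The transition semigroup of BESQ preserves polynomials and their leading terms, and on them it is
conjugate to a translation, so it can be run backwards in time. Biorthogonality asks exactly that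
`q l`, evolved up to time `t`, be the Lagrange basis polynomial of the node `a l`, so `q l` is that
polynomial evolved by time `-t`. The reflection `x ↦ -x` turns time `-t` into time `t`, which
realizes `q l` as an integral against `besqQ`. The moments of both `besqP` and `besqQ` are computed
by viewing them as mixtures of gamma densities with Poisson weights, signed in the case of `besqQ`.
-/

section Determinants

open Finset Equiv Matrix

variable {α β γ : Type*}

theorem exists_sumCongr_one_left_of_fix_inl [Finite α] [Finite β] {σ : Perm (α ⊕ β)}
    (h : ∀ i, σ (Sum.inl i) = Sum.inl i) : ∃ ρ : Perm β, Perm.sumCongr 1 ρ = σ := by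
  obtain ⟨⟨κ, ρ⟩, rfl⟩ : σ ∈ (Perm.sumCongrHom α β).range := by
    refine Perm.mem_sumCongrHom_range_of_perm_mapsTo_inl ?_
    rintro _ ⟨i, rfl⟩
    exact ⟨i, (h i).symm⟩
  obtain rfl : κ = 1 := Equiv.ext fun i => by simpa using h i
  exact ⟨ρ, rfl⟩

variable [Fintype α] [DecidableEq α] [Fintype β] [DecidableEq β]

theorem card_perm_comp_inl_eq {f : α → α ⊕ β} (hf : Function.Injective f) :
    #{σ : Perm (α ⊕ β) | σ ∘ Sum.inl = f} = (Fintype.card β).factorial := by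
  obtain ⟨σ₀, hσ₀⟩ := Perm.exists_extending_pair (Sum.inl : α → α ⊕ β) f Sum.inl_injective hf
  rw [← Fintype.card_perm, ← card_univ]
  refine (card_bij (fun ρ _ => σ₀ * Perm.sumCongr 1 ρ) (fun ρ _ => ?_) (fun ρ _ ρ' _ h => ?_)
    (fun σ hσ => ?_)).symm
  · rw [mem_filter_univ]
    exact funext hσ₀
  · exact (Prod.ext_iff.1 (Perm.sumCongrHom_injective (a₁ := (1, ρ)) (a₂ := (1, ρ'))
      (mul_left_cancel h))).2
  · rw [mem_filter_univ] at hσ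
    obtain ⟨ρ, hρ⟩ := exists_sumCongr_one_left_of_fix_inl (σ := σ₀⁻¹ * σ) fun i => by
      rw [Perm.mul_apply, Perm.inv_eq_iff_eq, hσ₀, ← hσ, Function.comp_apply]
    exact ⟨ρ, mem_univ _, by rw [hρ, mul_inv_cancel_left]⟩

theorem sum_perm_comp_inl {M : Type*} [AddCommMonoid M] {G : (α → α ⊕ β) → M}
    (hG : ∀ f, ¬ Function.Injective f → G f = 0) :
    ∑ σ : Perm (α ⊕ β), G (σ ∘ Sum.inl) = (Fintype.card β).factorial • ∑ f, G f := by
  rw [← sum_fiberwise univ (fun σ : Perm (α ⊕ β) => σ ∘ Sum.inl), smul_sum]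
  refine sum_congr rfl fun f _ => ?_
  rw [sum_congr rfl fun σ hσ => congrArg G (mem_filter.1 hσ).2, sum_const]
  by_cases hf : Function.Injective f
  · rw [card_perm_comp_inl_eq hf]
  · rw [hG f hf, smul_zero, smul_zero]

section CommRing

variable {R : Type*} [CommRing R]

theorem det_mul_eq_sum_prod_mul_det_submatrix [Fintype γ] (A : Matrix α γ R) (B : Matrix γ α R) :
    (A * B).det = ∑ f : α → γ, (∏ i, A i (f i)) * (B.submatrix f id).det := by
  have rows : A * B = of fun i => ∑ l, A i l • B l := by
    ext i j
    simp [mul_apply]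
  rw [rows]
  change detRowAlternating.toMultilinearMap (fun i => ∑ l, A i l • B l) = _
  rw [MultilinearMap.map_sum]
  exact sum_congr rfl fun f _ => AlternatingMap.map_smul_univ detRowAlternating _ _

theorem det_mul_det_eq_sum_det_fromRows (A B : Matrix (α ⊕ β) (α ⊕ β) R) :
    A.det * B.det = ∑ σ : Perm (α ⊕ β),
      ((Perm.sign σ : ℤ) * ∏ i, A (Sum.inl i) (σ (Sum.inl i))) *
        (fromRows B.toRows₁
          (of fun b c => A (Sum.inr b) (σ (Sum.inr b)) * B (Sum.inr b) c)).det := by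
  rw [← det_transpose A, det_apply', sum_mul]
  refine sum_congr rfl fun σ _ => ?_
  have scaled :
      fromRows B.toRows₁ (of fun b c => A (Sum.inr b) (σ (Sum.inr b)) * B (Sum.inr b) c)
        = of fun r c =>
          Sum.elim (fun _ => (1 : R)) (fun b => A (Sum.inr b) (σ (Sum.inr b))) r * B r c := by
    ext (i | b) c <;> simp
  rw [scaled, det_mul_column]
  simp only [transpose_apply, Fintype.prod_sum_type, Sum.elim_inl, Sum.elim_inr, prod_const_one,
    one_mul]
  ring

theorem det_fromRows_apply_eq_sum (A : Matrix α (α ⊕ β) R) (B : Matrix β (α ⊕ β) R) :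
    (fromRows A B).det = ∑ σ : Perm (α ⊕ β),
      ((Perm.sign σ : ℤ) * ∏ i, A i (σ (Sum.inl i))) * ∏ b, B b (σ (Sum.inr b)) := by
  simp only [← det_transpose (fromRows A B), det_apply', transpose_apply, Fintype.prod_sum_type,
    fromRows_apply_inl, fromRows_apply_inr, mul_assoc]

theorem det_fromRows_one_submatrix (A : Matrix α (α ⊕ β) R) (σ : Perm (α ⊕ β)) :
    (fromRows A ((1 : Matrix (α ⊕ β) (α ⊕ β) R).submatrix (σ ∘ Sum.inr) id)).det
      = (Perm.sign σ : ℤ) * (A.submatrix id (σ ∘ Sum.inl)).det := by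
  set M := fromRows A ((1 : Matrix (α ⊕ β) (α ⊕ β) R).submatrix (σ ∘ Sum.inr) id) with hM
  have blocks : M.submatrix id σ = fromBlocks (A.submatrix id (σ ∘ Sum.inl))
      (A.submatrix id (σ ∘ Sum.inr)) 0 1 := by
    ext (i | b) (j | c) <;> simp [hM, one_apply]
  have hdet := det_permute' σ M
  rw [blocks, det_fromBlocks_zero₂₁, det_one, mul_one] at hdet
  rw [hdet, ← mul_assoc, ← Int.cast_mul, Int.units_coe_mul_self, Int.cast_one, one_mul]

theorem sum_perm_prod_mul_det_submatrix (A B : Matrix α (α ⊕ β) R) :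
    ∑ σ : Perm (α ⊕ β), (∏ i, A i (σ (Sum.inl i))) * (B.submatrix id (σ ∘ Sum.inl)).det
      = (Fintype.card β).factorial * (A * Bᵀ).det := by
  let G (f : α → α ⊕ β) : R := (∏ i, A i (f i)) * (B.submatrix id f).det
  have G_eq_zero (f : α → α ⊕ β) (hf : ¬ Function.Injective f) : G f = 0 := by
    obtain ⟨i, j, hij, hne⟩ := Function.not_injective_iff.1 hf
    have : (B.submatrix id f).det = 0 := det_zero_of_column_eq hne fun k => by simp [hij]
    simp only [G, this, mul_zero]
  have sum_G : ∑ f, G f = (A * Bᵀ).det := by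
    rw [det_mul_eq_sum_prod_mul_det_submatrix]
    refine sum_congr rfl fun f _ => ?_
    rw [← det_transpose (Bᵀ.submatrix f id), transpose_submatrix, transpose_transpose]
  rw [← sum_G, ← nsmul_eq_mul]
  exact sum_perm_comp_inl G_eq_zero

end CommRing

section Integral

variable {𝕜 E : Type*} [RCLike 𝕜] [MeasurableSpace E] {μ : Measure E} [SigmaFinite μ]

theorem integrable_det_fromRows (A : Matrix α (α ⊕ β) 𝕜) {g : β → α ⊕ β → E → 𝕜}
    (hg : ∀ b c, Integrable (g b c) μ) :
    Integrable (fun z : β → E => (fromRows A (of fun b c => g b c (z b))).det)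
      (Measure.pi fun _ => μ) := by
  simp only [det_fromRows_apply_eq_sum, of_apply]
  exact integrable_finsetSum _ fun σ _ =>
    (Integrable.fintype_prod fun b => hg b (σ (Sum.inr b))).const_mul _

theorem integral_det_fromRows (A : Matrix α (α ⊕ β) 𝕜) {g : β → α ⊕ β → E → 𝕜}
    (hg : ∀ b c, Integrable (g b c) μ) :
    ∫ z : β → E, (fromRows A (of fun b c => g b c (z b))).det ∂(Measure.pi fun _ => μ)
      = (fromRows A (of fun b c => ∫ y, g b c y ∂μ)).det := by
  simp only [det_fromRows_apply_eq_sum, of_apply]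
  rw [integral_finsetSum _ fun σ _ =>
    (Integrable.fintype_prod fun b => hg b (σ (Sum.inr b))).const_mul _]
  refine sum_congr rfl fun σ _ => ?_
  rw [integral_const_mul, integral_fintype_prod_eq_prod fun b => g b (σ (Sum.inr b))]

theorem integral_det_mul_det_of_biorthogonal {φ ψ : α ⊕ β → E → 𝕜}
    (hint : ∀ k l, Integrable (fun y => φ k y * ψ l y) μ)
    (hφψ : ∀ k l, ∫ y, φ k y * ψ l y ∂μ = if k = l then 1 else 0) (x : α → E) :
    ∫ z, (of fun r c => φ c (Sum.elim x z r)).det * (of fun r c => ψ c (Sum.elim x z r)).det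
        ∂(Measure.pi fun _ : β => μ)
      = (Fintype.card β).factorial * (of fun i j => ∑ l, φ l (x i) * ψ l (x j)).det := by
  let Ψ : Matrix α (α ⊕ β) 𝕜 := of fun i l => ψ l (x i)
  let summand (σ : Perm (α ⊕ β)) (z : β → E) : 𝕜 :=
    ((Perm.sign σ : ℤ) * ∏ i, φ (σ (Sum.inl i)) (x i)) *
      (fromRows Ψ (of fun b c => φ (σ (Sum.inr b)) (z b) * ψ c (z b))).det
  have integral_summand (σ : Perm (α ⊕ β)) :
      ∫ z, summand σ z ∂(Measure.pi fun _ => μ)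
        = (∏ i, φ (σ (Sum.inl i)) (x i)) * (Ψ.submatrix id (σ ∘ Sum.inl)).det := by
    have pairing : (of fun b c => ∫ y, φ (σ (Sum.inr b)) y * ψ c y ∂μ)
        = (1 : Matrix (α ⊕ β) (α ⊕ β) 𝕜).submatrix (σ ∘ Sum.inr) id := by
      ext b c
      simp [hφψ, one_apply]
    have sign_sq : ((Perm.sign σ : ℤ) : 𝕜) * (Perm.sign σ : ℤ) = 1 := by
      rw [← Int.cast_mul, Int.units_coe_mul_self, Int.cast_one]
    rw [integral_const_mul, integral_det_fromRows Ψ fun b c => hint (σ (Sum.inr b)) c, pairing,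
      det_fromRows_one_submatrix]
    linear_combination
      (∏ i, φ (σ (Sum.inl i)) (x i)) * (Ψ.submatrix id (σ ∘ Sum.inl)).det * sign_sq
  have expand (z : β → E) : (of fun r c => φ c (Sum.elim x z r)).det *
      (of fun r c => ψ c (Sum.elim x z r)).det = ∑ σ, summand σ z := by
    rw [det_mul_det_eq_sum_det_fromRows]
    rfl
  have integrable_summand (σ : Perm (α ⊕ β)) : Integrable (summand σ) (Measure.pi fun _ => μ) :=
    (integrable_det_fromRows Ψ fun b c => hint (σ (Sum.inr b)) c).const_mul _
  simp_rw [expand]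
  rw [integral_finsetSum _ fun σ _ => integrable_summand σ]
  simp_rw [integral_summand]
  exact sum_perm_prod_mul_det_submatrix (of fun i l => φ l (x i)) Ψ

theorem extendConfig_finSumFinEquiv {N n : ℕ} (hn : n ≤ N) (x : Fin n → ℝ) (z : Fin (N - n) → ℝ)
    (r : Fin n ⊕ Fin (N - n)) :
    extendConfig hn x z (finCongr (Nat.add_sub_cancel' hn) (finSumFinEquiv r))
      = Sum.elim x z r := by
  rcases r with i | b <;> simp [extendConfig]

theorem integral_extendConfig_det_mul_det {N n : ℕ} (hn : n ≤ N) {μ : Measure ℝ} [SigmaFinite μ]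
    {φ ψ : Fin N → ℝ → ℝ} (hint : ∀ k l, Integrable (fun y => φ k y * ψ l y) μ)
    (hφψ : ∀ k l, ∫ y, φ k y * ψ l y ∂μ = if k = l then 1 else 0) (x : Fin n → ℝ) :
    ∫ z, (of fun i j => φ j (extendConfig hn x z i)).det
        * (of fun i j => ψ j (extendConfig hn x z i)).det ∂(Measure.pi fun _ => μ)
      = (N - n).factorial * (of fun i j => ∑ l, φ l (x i) * ψ l (x j)).det := by
  let e := finSumFinEquiv.trans (finCongr (Nat.add_sub_cancel' hn))
  have key := integral_det_mul_det_of_biorthogonal (μ := μ) (φ := φ ∘ e) (ψ := ψ ∘ e)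
    (fun k l => hint (e k) (e l)) (fun k l => by simp [hφψ]) x
  have reindex (f : Fin N → ℝ → ℝ) (z : Fin (N - n) → ℝ) :
      (of fun i j => f j (extendConfig hn x z i)).det
        = (of fun r c => (f ∘ e) c (Sum.elim x z r)).det := by
    rw [← det_submatrix_equiv_self e]
    congr 1
    ext r c
    exact congrArg (f (e c)) (extendConfig_finSumFinEquiv hn x z r)
  simp_rw [reindex]
  rw [key, Fintype.card_fin]
  congr 3
  ext i j
  exact Equiv.sum_comp e fun l => φ l (x i) * ψ l (x j)

end Integral

end Determinants

section Polynomials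

open Polynomial Matrix

/-- The diagonal operator on polynomials multiplying the coefficient of `X ^ n` by `f n`. -/
noncomputable def coeffScale {R : Type*} [CommSemiring R] (f : ℕ → R) : R[X] →ₗ[R] R[X] :=
  lsum fun n => f n • monomial n

theorem coeffScale_monomial {R : Type*} [CommSemiring R] (f : ℕ → R) (n : ℕ) (r : R) :
    coeffScale f (monomial n r) = monomial n (f n * r) := by
  simp [coeffScale, lsum_apply, sum_monomial_index, smul_monomial]

theorem coeff_coeffScale {R : Type*} [CommSemiring R] (f : ℕ → R) (p : R[X]) (n : ℕ) :
    (coeffScale f p).coeff n = f n * p.coeff n := by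
  induction p using Polynomial.induction_on' with
  | add p q hp hq => simp only [map_add, coeff_add, hp, hq, mul_add]
  | monomial m r =>
    rw [coeffScale_monomial, coeff_monomial, coeff_monomial]
    split_ifs with h
    · rw [h]
    · rw [mul_zero]

theorem coeff_comp_neg_X {R : Type*} [CommRing R] (p : R[X]) (n : ℕ) :
    (p.comp (-X)).coeff n = p.coeff n * (-1) ^ n := by
  rw [← neg_one_mul, ← C_1, ← C_neg, comp_C_mul_X_coeff]

theorem coeffScale_comp_neg_X {R : Type*} [CommRing R] (f : ℕ → R) (p : R[X]) :
    (coeffScale f p).comp (-X) = coeffScale f (p.comp (-X)) := by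
  ext n
  simp only [coeff_coeffScale, coeff_comp_neg_X, mul_assoc]

/-- The semigroup `exp (s * (X * D ^ 2 + c * D))` acting on polynomials, `D` being the derivative;
for `c = ν + 1` and `s = 2 * t` it is the transition semigroup of `BESQ^{(ν)}` at time `t`.
Conjugation by `X ^ n ↦ Γ(c + n) * X ^ n` turns `X * D ^ 2 + c * D` into `D`, so the semigroup is
encoded as a conjugate of the translation by `s`. -/
noncomputable def besqSemigroup (c s : ℝ) : ℝ[X] →ₗ[ℝ] ℝ[X] :=
  coeffScale (fun n => (Gamma (c + n))⁻¹) ∘ₗ taylor s ∘ₗ coeffScale fun n => Gamma (c + n)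

theorem besqSemigroup_apply (c s : ℝ) (p : ℝ[X]) :
    besqSemigroup c s p
      = coeffScale (fun n => (Gamma (c + n))⁻¹)
          (taylor s (coeffScale (fun n => Gamma (c + n)) p)) :=
  rfl

theorem besqSemigroup_comp_neg_X (c s : ℝ) (p : ℝ[X]) :
    (besqSemigroup c s (p.comp (-X))).comp (-X) = besqSemigroup c (-s) p := by
  have taylor_reflect (q : ℝ[X]) : (taylor s (q.comp (-X))).comp (-X) = taylor (-s) q := by
    simp only [taylor_apply, comp_assoc, neg_comp, X_comp, add_comp, C_comp, neg_add, neg_neg,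
      map_neg]
  rw [besqSemigroup_apply, besqSemigroup_apply, ← coeffScale_comp_neg_X,
    coeffScale_comp_neg_X, taylor_reflect]

theorem besqSemigroup_X_pow (c s : ℝ) (k : ℕ) :
    besqSemigroup c s (X ^ k)
      = Gamma (c + k) • coeffScale (fun n => (Gamma (c + n))⁻¹) ((X + C s) ^ k) := by
  rw [besqSemigroup_apply, ← monomial_one_right_eq_X_pow, coeffScale_monomial, taylor_monomial,
    mul_one, ← smul_eq_C_mul, map_smul]

theorem coeffScale_inv_Gamma_X_mul (c : ℝ) (p : ℝ[X]) :
    coeffScale (fun n => (Gamma (c + n))⁻¹) (X * p)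
      = X * coeffScale (fun n => (Gamma (c + 1 + n))⁻¹) p := by
  ext n
  cases n with
  | zero => simp only [coeff_coeffScale, mul_coeff_zero, coeff_X_zero, zero_mul, mul_zero]
  | succ n =>
    rw [coeff_coeffScale, coeff_X_mul, coeff_X_mul, coeff_coeffScale, Nat.cast_succ, add_assoc,
      add_comm 1]

section Positive

variable {c : ℝ} (hc : 0 < c)

include hc

theorem Gamma_add_nat_ne_zero (n : ℕ) : Gamma (c + n) ≠ 0 :=
  (Gamma_pos_of_pos (by positivity)).ne'

theorem besqSemigroup_add_apply (r s : ℝ) (p : ℝ[X]) :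
    besqSemigroup c r (besqSemigroup c s p) = besqSemigroup c (r + s) p := by
  have cancel (q : ℝ[X]) : coeffScale (fun n => Gamma (c + n))
      (coeffScale (fun n => (Gamma (c + n))⁻¹) q) = q := by
    ext n
    rw [coeff_coeffScale, coeff_coeffScale, mul_inv_cancel_left₀ (Gamma_add_nat_ne_zero hc n)]
  rw [besqSemigroup_apply, besqSemigroup_apply c s, cancel, taylor_taylor, ← besqSemigroup_apply]

theorem besqSemigroup_zero_apply (p : ℝ[X]) : besqSemigroup c 0 p = p := by
  ext n
  rw [besqSemigroup_apply, taylor_zero, coeff_coeffScale, coeff_coeffScale,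
    inv_mul_cancel_left₀ (Gamma_add_nat_ne_zero hc n)]

theorem coeff_besqSemigroup_X_pow_self (s : ℝ) (k : ℕ) :
    (besqSemigroup c s (X ^ k)).coeff k = 1 := by
  rw [besqSemigroup_X_pow, coeff_smul, coeff_coeffScale, coeff_X_add_C_pow, Nat.sub_self,
    Nat.choose_self, pow_zero, Nat.cast_one, mul_one, mul_one, smul_eq_mul,
    mul_inv_cancel₀ (Gamma_add_nat_ne_zero hc k)]

theorem natDegree_besqSemigroup_X_pow (s : ℝ) (k : ℕ) :
    (besqSemigroup c s (X ^ k)).natDegree = k := by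
  refine natDegree_eq_of_le_of_coeff_ne_zero (natDegree_le_iff_coeff_eq_zero.2 fun n hn => ?_)
    (by rw [coeff_besqSemigroup_X_pow_self hc]; exact one_ne_zero)
  rw [besqSemigroup_X_pow, coeff_smul, coeff_coeffScale, coeff_X_add_C_pow,
    Nat.choose_eq_zero_of_lt hn, Nat.cast_zero, mul_zero, mul_zero, smul_zero]

theorem monic_besqSemigroup_X_pow (s : ℝ) (k : ℕ) : (besqSemigroup c s (X ^ k)).Monic :=
  monic_of_natDegree_le_of_coeff_eq_one k (natDegree_besqSemigroup_X_pow hc s k).le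
    (coeff_besqSemigroup_X_pow_self hc s k)

theorem besqSemigroup_X_pow_succ (s : ℝ) (k : ℕ) :
    besqSemigroup c s (X ^ (k + 1))
      = X * besqSemigroup (c + 1) s (X ^ k) + (s * (c + k)) • besqSemigroup c s (X ^ k) := by
  have Gamma_succ : Gamma (c + 1 + k) = (c + k) * Gamma (c + k) := by
    rw [add_right_comm, Gamma_add_one (by positivity)]
  have expand : coeffScale (fun n => (Gamma (c + n))⁻¹) ((X + C s) ^ (k + 1))
      = X * coeffScale (fun n => (Gamma (c + 1 + n))⁻¹) ((X + C s) ^ k)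
        + s • coeffScale (fun n => (Gamma (c + n))⁻¹) ((X + C s) ^ k) := by
    rw [pow_succ', add_mul, map_add, coeffScale_inv_Gamma_X_mul, ← smul_eq_C_mul, map_smul]
  rw [besqSemigroup_X_pow, besqSemigroup_X_pow, besqSemigroup_X_pow, expand, Nat.cast_succ,
    add_comm (k : ℝ) 1, ← add_assoc, Gamma_succ, smul_add, mul_smul_comm, smul_smul, smul_smul]
  ring_nf

end Positive

theorem of_eval_map_eq_mul_coeff {R : Type*} [CommSemiring R] {N : ℕ} {m : Type*}
    (T : R[X] →ₗ[R] R[X]) {p : Fin N → R[X]} (hp : ∀ j, (p j).natDegree < N) (v : m → R) :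
    (of fun i j => (T (p j)).eval (v i))
      = (of fun i (k : Fin N) => (T (X ^ (k : ℕ))).eval (v i)) *
        of fun (k : Fin N) j => (p j).coeff k := by
  ext i j
  simp only [mul_apply, of_apply]
  conv_lhs => rw [(p j).as_sum_range' N (hp j), map_sum, eval_finsetSum, Finset.sum_range]
  refine Finset.sum_congr rfl fun k _ => ?_
  rw [← C_mul_X_pow_eq_monomial, ← smul_eq_C_mul, map_smul, eval_smul, smul_eq_mul, mul_comm]

theorem of_eval_eq_vandermonde_mul_coeff {R : Type*} [CommRing R] {N : ℕ} {p : Fin N → R[X]}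
    (hp : ∀ j, (p j).natDegree < N) (v : Fin N → R) :
    (of fun i j => (p j).eval (v i)) = vandermonde v * of fun (k : Fin N) j => (p j).coeff k := by
  refine (of_eval_map_eq_mul_coeff LinearMap.id hp v).trans ?_
  congr 1
  ext i k
  simp only [of_apply, LinearMap.id_apply, eval_pow, eval_X, vandermonde_apply]

theorem det_eval_map_eq_det_eval {R : Type*} [CommRing R] {N : ℕ} {T : R[X] →ₗ[R] R[X]}
    (hdeg : ∀ k, (T (X ^ k)).natDegree = k) (hmonic : ∀ k, (T (X ^ k)).Monic)
    {p : Fin N → R[X]} (hp : ∀ j, (p j).natDegree < N) (v : Fin N → R) :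
    (of fun i j => (T (p j)).eval (v i)).det = (of fun i j => (p j).eval (v i)).det := by
  rw [of_eval_map_eq_mul_coeff T hp v, of_eval_eq_vandermonde_mul_coeff hp v, det_mul, det_mul,
    det_eval_matrixOfPolynomials_eq_det_vandermonde v (fun k => T (X ^ (k : ℕ)))
      (fun k => hdeg k) (fun k => hmonic k)]

theorem natDegree_lagrangeBasis_lt {F : Type*} [Field F] {N : ℕ} {a : Fin N → F}
    (ha : Function.Injective a) (j : Fin N) : (Lagrange.basis Finset.univ a j).natDegree < N := by
  rw [Lagrange.natDegree_basis ha.injOn (Finset.mem_univ j), Finset.card_fin]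
  exact Nat.sub_one_lt_of_lt j.pos

theorem eval_lagrangeBasis {F : Type*} [Field F] {N : ℕ} {a : Fin N → F}
    (ha : Function.Injective a) (i j : Fin N) :
    (Lagrange.basis Finset.univ a j).eval (a i) = if i = j then 1 else 0 := by
  split_ifs with h
  · rw [h, Lagrange.eval_basis_self ha.injOn (Finset.mem_univ j)]
  · rw [Lagrange.eval_basis_of_ne (Ne.symm h) (Finset.mem_univ i)]

theorem det_eval_lagrangeBasis {F : Type*} [Field F] {N : ℕ} {a : Fin N → F}
    (ha : Function.Injective a) (v : Fin N → F) :
    (of fun i j => (Lagrange.basis Finset.univ a j).eval (v i)).det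
      = (vandermonde v).det / (vandermonde a).det := by
  have factor := of_eval_eq_vandermonde_mul_coeff (natDegree_lagrangeBasis_lt ha)
  have at_nodes : (of fun i j => (Lagrange.basis Finset.univ a j).eval (a i)) = 1 := by
    ext i j
    rw [of_apply, eval_lagrangeBasis ha, one_apply]
  have hdet := congrArg det ((factor a).symm.trans at_nodes)
  rw [det_mul, det_one] at hdet
  rw [factor v, det_mul, eq_div_iff (det_vandermonde_ne_zero_iff.2 ha), mul_right_comm,
    mul_assoc, hdet, mul_one]

end Polynomials

section Kernel

open Polynomial ProbabilityTheory

/-- The weights `exp (-r) * r ^ n / n!` of the Poisson distribution, also for negative `r`, where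
they are signed: this is what extends `poissonGammaPDF` to negative starting points. -/
noncomputable def poissonWeight (r : ℝ) (n : ℕ) : ℝ :=
  exp (-r) * r ^ n / n.factorial

theorem hasSum_poissonWeight (r : ℝ) : HasSum (poissonWeight r) 1 := by
  have h := (NormedSpace.expSeries_div_hasSum_exp r).mul_left (exp (-r))
  rw [← Real.exp_eq_exp_ℝ, ← exp_add, neg_add_cancel, exp_zero] at h
  simp only [← mul_div_assoc] at h
  exact h

theorem poissonWeight_succ_mul (r : ℝ) (n : ℕ) :
    poissonWeight r (n + 1) * (n + 1 : ℕ) = r * poissonWeight r n := by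
  have : ((n + 1 : ℕ) : ℝ) ≠ 0 := by positivity
  rw [poissonWeight, poissonWeight, Nat.factorial_succ, Nat.cast_mul]
  field_simp
  ring

theorem abs_poissonWeight (r : ℝ) (n : ℕ) :
    |poissonWeight r n| = exp (|r| - r) * poissonWeight |r| n := by
  rw [poissonWeight, poissonWeight, abs_div, abs_mul, abs_exp, abs_pow, Nat.abs_cast,
    ← mul_div_assoc, ← mul_assoc, ← exp_add]
  ring_nf

theorem hasSum_poissonWeight_mul_natCast_mul {r x : ℝ} {f : ℕ → ℝ}
    (h : HasSum (fun n => poissonWeight r n * f (n + 1)) x) :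
    HasSum (fun n => poissonWeight r n * (n * f n)) (r * x) := by
  rw [← hasSum_nat_add_iff' 1]
  simpa only [Finset.range_one, Finset.sum_singleton, Nat.cast_zero, zero_mul, mul_zero, sub_zero,
    ← mul_assoc, poissonWeight_succ_mul] using h.mul_left r

theorem hasSum_poissonWeight_mul_Gamma_ratio {c s : ℝ} (hc : 0 < c) (hs : s ≠ 0) (u : ℝ) (k : ℕ) :
    HasSum (fun n : ℕ => poissonWeight (u / s) n * (s ^ k * (Gamma (n + c + k) / Gamma (n + c))))
      ((besqSemigroup c s (X ^ k)).eval u) := by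
  induction k generalizing c with
  | zero =>
    have Gamma_ratio (n : ℕ) : Gamma (n + c) / Gamma (n + c) = 1 :=
      div_self (Gamma_pos_of_pos (by positivity)).ne'
    rw [(monic_besqSemigroup_X_pow hc s 0).natDegree_eq_zero.1
      (natDegree_besqSemigroup_X_pow hc s 0), eval_one]
    simpa only [pow_zero, Nat.cast_zero, add_zero, Gamma_ratio, mul_one] using
      hasSum_poissonWeight (u / s)
  | succ k ih =>
    let f (n : ℕ) : ℝ := s ^ k * (Gamma (n + c + k) / Gamma (n + c))
    have shifted : HasSum (fun n => poissonWeight (u / s) n * f (n + 1))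
        ((besqSemigroup (c + 1) s (X ^ k)).eval u) := by
      simpa only [f, Nat.cast_succ, add_assoc, add_left_comm, add_comm] using
        ih (c := c + 1) (by positivity)
    have value : (besqSemigroup c s (X ^ (k + 1))).eval u
        = s * (u / s * (besqSemigroup (c + 1) s (X ^ k)).eval u)
          + s * (c + k) * (besqSemigroup c s (X ^ k)).eval u := by
      rw [besqSemigroup_X_pow_succ hc, eval_add, eval_mul, eval_X, eval_smul, smul_eq_mul,
        ← mul_assoc, mul_div_cancel₀ u hs]
    have term (n : ℕ) :
        poissonWeight (u / s) n * (s ^ (k + 1) * (Gamma (n + c + (k + 1 : ℕ)) / Gamma (n + c)))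
          = s * (poissonWeight (u / s) n * (n * f n))
            + s * (c + k) * (poissonWeight (u / s) n * f n) := by
      rw [Nat.cast_succ, ← add_assoc, Gamma_add_one (by positivity)]
      simp only [f]
      ring
    simp only [value, term]
    exact ((hasSum_poissonWeight_mul_natCast_mul shifted).mul_left s).add
      ((ih hc).mul_left (s * (c + k)))

section GammaMoments

variable {a r : ℝ} (k : ℕ)

theorem gammaPDFReal_mul_pow (a r : ℝ) {v : ℝ} (hv : 0 < v) :
    gammaPDFReal a r v * v ^ k
      = r ^ a / Gamma a * (v ^ (a + k - 1) * exp (-(r * v))) := by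
  rw [gammaPDFReal, if_pos hv.le, add_sub_right_comm, rpow_add hv, rpow_natCast]
  ring

theorem integrableOn_gammaPDFReal_mul_pow_s15 (ha : 0 < a) (hr : 0 < r) :
    IntegrableOn (fun v => gammaPDFReal a r v * v ^ k) (Set.Ioi 0) := by
  refine IntegrableOn.congr_fun ?_ (fun v hv => (gammaPDFReal_mul_pow k a r hv).symm)
    measurableSet_Ioi
  have base := integrableOn_rpow_mul_exp_neg_mul_rpow (p := 1) (s := a + k - 1)
    (by linarith [k.cast_nonneg (α := ℝ)]) one_pos hr
  simp only [rpow_one, neg_mul] at base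
  exact base.const_mul _

theorem setIntegral_gammaPDFReal_mul_pow (ha : 0 < a) (hr : 0 < r) :
    ∫ v in Set.Ioi (0 : ℝ), gammaPDFReal a r v * v ^ k
      = r⁻¹ ^ k * (Gamma (a + k) / Gamma a) := by
  rw [setIntegral_congr_fun measurableSet_Ioi fun v hv => gammaPDFReal_mul_pow k a r hv,
    integral_const_mul, integral_rpow_mul_exp_neg_mul_Ioi (by positivity) hr, one_div,
    rpow_add (inv_pos.2 hr), rpow_natCast, inv_rpow hr.le]
  have : r ^ a ≠ 0 := (rpow_pos_of_pos hr a).ne'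
  field_simp

end GammaMoments

theorem integrable_tsum {α ι : Type*} [MeasurableSpace α] {μ : Measure α} [Countable ι]
    {F : ι → α → ℝ} (hF : ∀ i, Integrable (F i) μ) (hsum : Summable fun i => ∫ x, ‖F i x‖ ∂μ) :
    Integrable (fun x => ∑' i, F i x) μ := by
  refine ⟨(AEMeasurable.tsum fun i => (hF i).1.aemeasurable).aestronglyMeasurable, ?_⟩
  calc ∫⁻ x, ‖∑' i, F i x‖ₑ ∂μ
      ≤ ∫⁻ x, ∑' i, ‖F i x‖ₑ ∂μ := lintegral_mono fun x => enorm_tsum_le_tsum_enorm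
    _ = ∑' i, ENNReal.ofReal (∫ x, ‖F i x‖ ∂μ) := by
        rw [lintegral_tsum fun i => (hF i).1.enorm]
        exact tsum_congr fun i => (ofReal_integral_norm_eq_lintegral_enorm (hF i)).symm
    _ = ENNReal.ofReal (∑' i, ∫ x, ‖F i x‖ ∂μ) :=
        (ENNReal.ofReal_tsum_of_nonneg (fun i => integral_nonneg fun x => norm_nonneg _) hsum).symm
    _ < ⊤ := ENNReal.ofReal_lt_top

/-- The mixture of gamma densities of shapes `n + c` and common scale `s`, with Poisson weights of
parameter `u / s`. For `u > 0` it is the transition density of `besqSemigroup c s` from `u` to `v`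
(a scaled noncentral chi-squared law); negative `u` gives its analytic continuation. -/
noncomputable def poissonGammaPDF (c s u v : ℝ) : ℝ :=
  ∑' n : ℕ, poissonWeight (u / s) n * gammaPDFReal (n + c) s⁻¹ v

section Moments

variable {c s : ℝ} (hc : 0 < c) (hs : 0 < s) (u : ℝ)

include hc hs

theorem integrableOn_poissonGamma_term (n k : ℕ) :
    IntegrableOn (fun v => poissonWeight (u / s) n * gammaPDFReal (n + c) s⁻¹ v * v ^ k)
      (Set.Ioi 0) := by
  simp only [mul_assoc]
  exact (integrableOn_gammaPDFReal_mul_pow_s15 k (by positivity) (by positivity)).const_mul _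

theorem hasSum_setIntegral_poissonGamma_term (k : ℕ) :
    HasSum (fun n : ℕ => ∫ v in Set.Ioi (0 : ℝ),
      poissonWeight (u / s) n * gammaPDFReal (n + c) s⁻¹ v * v ^ k)
      ((besqSemigroup c s (X ^ k)).eval u) := by
  convert hasSum_poissonWeight_mul_Gamma_ratio hc hs.ne' u k using 2 with n
  simp only [mul_assoc]
  rw [integral_const_mul, setIntegral_gammaPDFReal_mul_pow k (by positivity) (by positivity),
    inv_inv]

theorem summable_setIntegral_norm_poissonGamma_term (k : ℕ) :
    Summable fun n : ℕ => ∫ v in Set.Ioi (0 : ℝ),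
      ‖poissonWeight (u / s) n * gammaPDFReal (n + c) s⁻¹ v * v ^ k‖ := by
  have norm_term (n : ℕ) {v : ℝ} (hv : 0 < v) :
      ‖poissonWeight (u / s) n * gammaPDFReal (n + c) s⁻¹ v * v ^ k‖
        = exp (|u| / s - u / s) *
          (poissonWeight (|u| / s) n * gammaPDFReal (n + c) s⁻¹ v * v ^ k) := by
    have hgamma := gammaPDFReal_nonneg (a := n + c) (r := s⁻¹) (by positivity) (by positivity) v
    rw [norm_mul, norm_mul, norm_eq_abs, abs_poissonWeight, norm_of_nonneg hgamma,
      norm_of_nonneg (pow_nonneg hv.le k), abs_div, abs_of_pos hs]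
    ring
  have hsum := (hasSum_setIntegral_poissonGamma_term hc hs |u| k).summable
  refine (hsum.mul_left (exp (|u| / s - u / s))).congr fun n => ?_
  rw [← integral_const_mul]
  exact setIntegral_congr_fun measurableSet_Ioi fun v hv => (norm_term n hv).symm

theorem poissonGammaPDF_moment (k : ℕ) :
    IntegrableOn (fun v => poissonGammaPDF c s u v * v ^ k) (Set.Ioi 0) ∧
      ∫ v in Set.Ioi (0 : ℝ), poissonGammaPDF c s u v * v ^ k
        = (besqSemigroup c s (X ^ k)).eval u := by
  have hint (n : ℕ) := integrableOn_poissonGamma_term hc hs u n k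
  have hsum := summable_setIntegral_norm_poissonGamma_term hc hs u k
  simp only [poissonGammaPDF, ← tsum_mul_right]
  exact ⟨integrable_tsum hint hsum, (hasSum_integral_of_summable_integral_norm hint hsum).unique
    (hasSum_setIntegral_poissonGamma_term hc hs u k)⟩

theorem integrableOn_poissonGammaPDF_mul_eval (p : ℝ[X]) :
    IntegrableOn (fun v => poissonGammaPDF c s u v * p.eval v) (Set.Ioi 0) := by
  simp only [eval_eq_sum_range, Finset.mul_sum, mul_left_comm _ (p.coeff _)]
  exact integrable_finsetSum _ fun k _ => (poissonGammaPDF_moment hc hs u k).1.const_mul _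

theorem setIntegral_poissonGammaPDF_mul_eval (p : ℝ[X]) :
    ∫ v in Set.Ioi (0 : ℝ), poissonGammaPDF c s u v * p.eval v = (besqSemigroup c s p).eval u := by
  induction p using Polynomial.induction_on' with
  | add p q hp hq =>
    simp only [eval_add, mul_add, map_add]
    rw [integral_add (integrableOn_poissonGammaPDF_mul_eval hc hs u p)
      (integrableOn_poissonGammaPDF_mul_eval hc hs u q), hp, hq]
  | monomial k r =>
    simp only [eval_monomial, mul_left_comm _ r]
    rw [integral_const_mul, (poissonGammaPDF_moment hc hs u k).2, ← C_mul_X_pow_eq_monomial,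
      ← smul_eq_C_mul, map_smul, eval_smul, smul_eq_mul]

end Moments

section Bessel

theorem besselArgument_rpow {s x y : ℝ} (hs : 0 < s) (hx : 0 < x) (hy : 0 < y) (ν : ℝ) (n : ℕ) :
    1 / s * (y / x) ^ (ν / 2) * (√(x * y) / s) ^ (2 * (n : ℝ) + ν)
      = (x / s) ^ n * y ^ (n + (ν + 1) - 1) * s⁻¹ ^ (n + (ν + 1)) := by
  rw [← exp_log hs, ← exp_log hx, ← exp_log hy, ← rpow_natCast, one_div, ← exp_neg, ← exp_add,
    ← exp_half]
  simp only [← exp_sub, ← exp_mul, ← exp_add]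
  ring_nf

theorem besqP_eq_poissonGammaPDF {t x y : ℝ} (ht : 0 < t) (hx : 0 < x) (hy : 0 < y) (ν : ℝ) :
    besqP ν t y x = poissonGammaPDF (ν + 1) (2 * t) x y := by
  rw [besqP, besselI, poissonGammaPDF, ← tsum_mul_left]
  refine tsum_congr fun n => ?_
  have power := besselArgument_rpow (s := 2 * t) (by positivity) hx hy ν n
  have exponent : -(x + y) / (2 * t) = -(x / (2 * t)) + -((2 * t)⁻¹ * y) := by ring
  have argument : √(x * y) / t / 2 = √(x * y) / (2 * t) := by ring
  rw [poissonWeight, gammaPDFReal, if_pos hy.le, argument, exponent, exp_add,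
    Gamma_nat_eq_factorial, add_assoc (n : ℝ), add_comm 1 ν]
  linear_combination (exp (-(x / (2 * t))) * exp (-((2 * t)⁻¹ * y)) /
    (n.factorial * Gamma (n + (ν + 1)))) * power

theorem besqQ_eq_poissonGammaPDF {t v y : ℝ} (ht : 0 < t) (hv : 0 < v) (hy : 0 < y) (ν : ℝ) :
    besqQ ν t v y = poissonGammaPDF (ν + 1) (2 * t) (-y) v := by
  rw [besqQ, besselJ, poissonGammaPDF, ← tsum_mul_left]
  refine tsum_congr fun n => ?_
  have power := besselArgument_rpow (s := 2 * t) (by positivity) hy hv ν n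
  have exponent : (y - v) / (2 * t) = y / (2 * t) + -((2 * t)⁻¹ * v) := by ring
  have argument : √(v * y) / t / 2 = √(y * v) / (2 * t) := by ring_nf
  rw [poissonWeight, gammaPDFReal, if_pos hv.le, argument, exponent, exp_add,
    Gamma_nat_eq_factorial, add_assoc (n : ℝ), add_comm 1 ν, neg_div, neg_neg,
    neg_pow (y / (2 * t))]
  linear_combination (exp (y / (2 * t)) * exp (-((2 * t)⁻¹ * v)) * (-1) ^ n /
    (n.factorial * Gamma (n + (ν + 1)))) * power

end Bessel

end Kernel

section DualPolynomials

open Polynomial Matrix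

variable {N : ℕ}

/-- The polynomials biorthogonal to the densities `besqP ν t · (a k)`, for `c = ν + 1` and
`s = 2 * t`: the Lagrange basis at the nodes `a`, evolved backwards in time. -/
noncomputable def dualPolynomial (c s : ℝ) (a : Fin N → ℝ) (l : Fin N) : ℝ[X] :=
  besqSemigroup c (-s) (Lagrange.basis Finset.univ a l)

theorem det_eval_dualPolynomial {c : ℝ} (hc : 0 < c) (s : ℝ) {a : Fin N → ℝ}
    (ha : Function.Injective a) (v : Fin N → ℝ) :
    (of fun i j => (dualPolynomial c s a j).eval (v i)).det = vdm v / vdm a :=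
  calc (of fun i j => (dualPolynomial c s a j).eval (v i)).det
      = (of fun i j => (Lagrange.basis Finset.univ a j).eval (v i)).det :=
        det_eval_map_eq_det_eval (natDegree_besqSemigroup_X_pow hc (-s))
          (monic_besqSemigroup_X_pow hc (-s)) (natDegree_lagrangeBasis_lt ha) v
    _ = (vandermonde v).det / (vandermonde a).det := det_eval_lagrangeBasis ha v
    _ = vdm v / vdm a := by rw [det_vandermonde, det_vandermonde, vdm, vdm]

theorem eval_neg_lagrangeBasis (a : Fin N → ℝ) (l : Fin N) (v : ℝ) :
    (Lagrange.basis Finset.univ a l).eval (-v)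
      = ∏ k ∈ Finset.univ.erase l, (a k + v) / (a k - a l) := by
  rw [Lagrange.basis, eval_prod]
  refine Finset.prod_congr rfl fun k _ => ?_
  rw [Lagrange.basisDivisor, eval_mul, eval_C, eval_sub, eval_X, eval_C, ← neg_sub (a k) (a l),
    inv_neg]
  ring

variable {ν t : ℝ} (hν : -1 < ν) (ht : 0 < t)

include hν ht

theorem setIntegral_prod_mul_besqQ (a : Fin N → ℝ) (l : Fin N) {y : ℝ} (hy : 0 < y) :
    ∫ v in Set.Ioi (0 : ℝ),
        (∏ k ∈ Finset.univ.erase l, (a k + v) / (a k - a l)) * besqQ ν t v y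
      = (dualPolynomial (ν + 1) (2 * t) a l).eval y := by
  let p := (Lagrange.basis Finset.univ a l).comp (-X)
  have integrand {v : ℝ} (hv : 0 < v) :
      (∏ k ∈ Finset.univ.erase l, (a k + v) / (a k - a l)) * besqQ ν t v y
        = poissonGammaPDF (ν + 1) (2 * t) (-y) v * p.eval v := by
    rw [besqQ_eq_poissonGammaPDF ht hv hy, ← eval_neg_lagrangeBasis, eval_comp, eval_neg, eval_X,
      mul_comm]
  rw [setIntegral_congr_fun measurableSet_Ioi fun v hv => integrand hv,
    setIntegral_poissonGammaPDF_mul_eval (by linarith) (by positivity), dualPolynomial,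
    ← besqSemigroup_comp_neg_X, eval_comp, eval_neg, eval_X]

theorem corrK_eq_sum_besqP_mul_dualPolynomial (a : Fin N → ℝ) (x : ℝ) {y : ℝ} (hy : 0 < y) :
    corrK ν a t x y
      = ∑ l, besqP ν t x (a l) * (dualPolynomial (ν + 1) (2 * t) a l).eval y := by
  simp only [corrK, setIntegral_prod_mul_besqQ hν ht a _ hy]

theorem integrableOn_besqP_mul_eval {x : ℝ} (hx : 0 < x) (p : ℝ[X]) :
    IntegrableOn (fun y => besqP ν t y x * p.eval y) (Set.Ioi 0) := by
  have base := integrableOn_poissonGammaPDF_mul_eval (c := ν + 1) (s := 2 * t) (by linarith)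
    (by positivity) x p
  exact base.congr_fun (fun y hy => by rw [besqP_eq_poissonGammaPDF ht hx hy]) measurableSet_Ioi

theorem setIntegral_besqP_mul_eval {x : ℝ} (hx : 0 < x) (p : ℝ[X]) :
    ∫ y in Set.Ioi (0 : ℝ), besqP ν t y x * p.eval y
      = (besqSemigroup (ν + 1) (2 * t) p).eval x := by
  rw [← setIntegral_poissonGammaPDF_mul_eval (by linarith) (by positivity)]
  exact setIntegral_congr_fun measurableSet_Ioi fun y hy => by
    rw [besqP_eq_poissonGammaPDF ht hx hy]

theorem setIntegral_besqP_mul_dualPolynomial {a : Fin N → ℝ} (hapos : ∀ l, 0 < a l)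
    (ha : Function.Injective a) (k l : Fin N) :
    ∫ y in Set.Ioi (0 : ℝ), besqP ν t y (a k) * (dualPolynomial (ν + 1) (2 * t) a l).eval y
      = if k = l then 1 else 0 := by
  have hc : 0 < ν + 1 := by linarith
  rw [setIntegral_besqP_mul_eval hν ht (hapos k), dualPolynomial, besqSemigroup_add_apply hc,
    add_neg_cancel, besqSemigroup_zero_apply hc, eval_lagrangeBasis ha]

end DualPolynomials

/-- The single-time `n`-point correlation function of the noncolliding BESQ^{(ν)}
process started at `0 < a₁ < ⋯ < a_N` is the determinant of the kernel `K_t`. -/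
theorem single_time_correlation_determinantal
    (ν : ℝ) (hν : -1 < ν) (N : ℕ) (hN : 1 ≤ N)
    (a : Fin N → ℝ) (hapos : ∀ ℓ, 0 < a ℓ) (hamono : StrictMono a)
    (t : ℝ) (ht : 0 < t) (n : ℕ) (hn₁ : 1 ≤ n) (hn₂ : n ≤ N)
    (x : Fin n → ℝ) (hxpos : ∀ i, 0 < x i) (hxdist : Function.Injective x) :
    (1 / (N - n).factorial : ℝ) *
        ∫ z in Set.univ.pi (fun _ : Fin (N - n) => Set.Ioi (0 : ℝ)),
          (vdm (extendConfig hn₂ x z) / vdm a) *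
            Matrix.det (Matrix.of fun i j : Fin N =>
              besqP ν t (extendConfig hn₂ x z i) (a j))
      = Matrix.det (Matrix.of fun i j : Fin n => corrK ν a t (x i) (x j)) := by
  let q (l : Fin N) (y : ℝ) : ℝ := (dualPolynomial (ν + 1) (2 * t) a l).eval y
  have vandermonde_ratio (v : Fin N → ℝ) :
      vdm v / vdm a = (Matrix.of fun i j => q j (v i)).det :=
    (det_eval_dualPolynomial (by linarith) (2 * t) hamono.injective v).symm
  have kernel : (Matrix.of fun i j => corrK ν a t (x i) (x j))
      = Matrix.of fun i j => ∑ l, besqP ν t (x i) (a l) * q l (x j) := by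
    ext i j
    exact corrK_eq_sum_besqP_mul_dualPolynomial hν ht a (x i) (hxpos j)
  have key := integral_extendConfig_det_mul_det hn₂ (μ := volume.restrict (Set.Ioi 0))
    (φ := fun l y => besqP ν t y (a l)) (ψ := q)
    (fun k _ => integrableOn_besqP_mul_eval hν ht (hapos k) _)
    (setIntegral_besqP_mul_dualPolynomial hν ht hapos hamono.injective) x
  rw [volume_pi, Measure.restrict_pi_pi]
  simp_rw [vandermonde_ratio, mul_comm (Matrix.det (Matrix.of fun _ j => q j _))]
  rw [key, kernel, one_div, inv_mul_cancel_left₀ (by positivity)]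
end
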